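/- Let ψ be a propositional formula over the pairwise disjoint atom sets V, X, Y, let u be a fresh atom, ab ∈ Ab, and φ = ψ ∨ u. Let T1 = {Y, u : φ, u ↔ ab} and T2 = {X, Y, u : T1, u ↔ ¬ab}. Then T2 ⊨ u if and only if for every truth assignment ν to V, the QBF ∃X ∀Y ¬ψ[ν(V)] is true (equivalently, ∀X ∃Y ψ[ν(V)] is false). -/

import Mathlib

/-!
STATEMENT 7: the nested NAT `T₂ = {X, Y, u : T₁, u ↔ ¬ab}` with
`T₁ = {Y, u : ψ ∨ u, u ↔ ab}` satisfies: `T₂ ⊨ u` iff for every assignment ν to the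
parameters `V`, the QBF `∃X ∀Y ¬ψ[ν(V)]` is true.
-/

namespace NestedCirc

universe u
variable {α : Type u}

/-- Propositional formulas over atoms `α`. -/
inductive PForm (α : Type u) : Type u where
  | tru : PForm α
  | fls : PForm α
  | atom : α → PForm α
  | neg : PForm α → PForm α
  | conj : PForm α → PForm α → PForm α
  | disj : PForm α → PForm α → PForm α

namespace PForm

/-- Satisfaction of a propositional formula in an interpretation (set of true atoms). -/
def sat : PForm α → Set α → Prop
  | tru, _ => True
  | fls, _ => False
  | atom a, M => a ∈ M
  | neg φ, M => ¬ φ.sat M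
  | conj φ ψ, M => φ.sat M ∧ ψ.sat M
  | disj φ ψ, M => φ.sat M ∨ ψ.sat M

/-- Implication `φ → ψ`. -/
def imp (φ ψ : PForm α) : PForm α := disj (neg φ) ψ

/-- Equivalence `φ ↔ ψ`. -/
def iffF (φ ψ : PForm α) : PForm α := conj (imp φ ψ) (imp ψ φ)

/-- The atoms occurring in a formula. -/
def atoms : PForm α → Set α
  | tru => ∅
  | fls => ∅
  | atom a => {a}
  | neg φ => φ.atoms
  | conj φ ψ => φ.atoms ∪ ψ.atoms
  | disj φ ψ => φ.atoms ∪ ψ.atoms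

/-- Conjunction of a list of formulas. -/
def conjList (l : List (PForm α)) : PForm α := l.foldr conj tru

end PForm

/-- `M ≤_{P;Z} M'` : `M` agrees with `M'` on the fixed atoms `(P ∪ Z)ᶜ`
and is smaller or equal on the minimized atoms `P`. -/
def lePZ (P Z M M' : Set α) : Prop :=
  M ∩ P ⊆ M' ∩ P ∧ M ∩ (P ∪ Z)ᶜ = M' ∩ (P ∪ Z)ᶜ

/-- `M <_{P;Z} M'` (strict preference). -/
def ltPZ (P Z M M' : Set α) : Prop := lePZ P Z M M' ∧ ¬ lePZ P Z M' M

/-- A block `{C : B₁,…,Bₘ}` of a nested abnormality theory: the described atoms `C`,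
the members that are propositional formulas, and the members that are blocks. -/
inductive Block (α : Type u) : Type u where
  | mk : Set α → List (PForm α) → List (Block α) → Block α

/-- Satisfaction of a block: `M ⊨ {C : B₁,…,Bₘ}` iff some interpretation `M*` agreeing
with `M` outside `Ab` satisfies every member and is `(Ab;C)`-minimal doing so. -/
def Block.sat (Ab : Set α) : Block α → Set α → Prop
  | .mk C fs bs, M =>
      ∃ Ms : Set α, Ms ∩ Abᶜ = M ∩ Abᶜ ∧
        ((∀ f ∈ fs, f.sat Ms) ∧ ∀ b ∈ bs, Block.sat Ab b Ms) ∧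
        ∀ N : Set α, ((∀ f ∈ fs, f.sat N) ∧ ∀ b ∈ bs, Block.sat Ab b N) → ¬ ltPZ Ab C N Ms

/-- A nested abnormality theory (NAT): a finite collection of blocks. -/
abbrev NAT (α : Type u) := List (Block α)

/-- `M ⊨ T` iff `M` satisfies every block of `T`. -/
def NAT.sat (Ab : Set α) (T : NAT α) (M : Set α) : Prop := ∀ B ∈ T, Block.sat Ab B M

theorem sat_congr (ψ : PForm α) (M N : Set α) (h : ∀ a ∈ ψ.atoms, (a ∈ M ↔ a ∈ N)) :
    ψ.sat M ↔ ψ.sat N := by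
  induction ψ with
  | tru => exact Iff.rfl
  | fls => exact Iff.rfl
  | atom a => exact h a rfl
  | neg φ ih => exact not_congr (ih h)
  | conj φ χ ih1 ih2 =>
    exact and_congr (ih1 fun a ha => h a (Or.inl ha)) (ih2 fun a ha => h a (Or.inr ha))
  | disj φ χ ih1 ih2 =>
    exact or_congr (ih1 fun a ha => h a (Or.inl ha)) (ih2 fun a ha => h a (Or.inr ha))

theorem lePZ_iff (P Z M M' : Set α) : lePZ P Z M M' ↔
    (∀ a ∈ P, a ∈ M → a ∈ M') ∧ (∀ a, a ∉ P → a ∉ Z → (a ∈ M ↔ a ∈ M')) := by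
  simp only [lePZ, Set.subset_def, Set.ext_iff, Set.mem_inter_iff, Set.mem_compl_iff,
    Set.mem_union]
  grind

theorem agree_iff (P M M' : Set α) : M ∩ Pᶜ = M' ∩ Pᶜ ↔ ∀ a, a ∉ P → (a ∈ M ↔ a ∈ M') := by
  simp only [Set.ext_iff, Set.mem_inter_iff, Set.mem_compl_iff]
  grind

theorem iffF_sat (φ ψ : PForm α) (M : Set α) :
    (PForm.iffF φ ψ).sat M ↔ (φ.sat M ↔ ψ.sat M) := by
  simp only [PForm.iffF, PForm.imp, PForm.sat]
  tauto

/-- Minimal elements of a predicate, semantically. -/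
def minSat (Ab C : Set α) (Q : Set α → Prop) (M : Set α) : Prop :=
  ∃ Ms : Set α, (∀ a, a ∉ Ab → (a ∈ Ms ↔ a ∈ M)) ∧ Q Ms ∧ ∀ N, Q N → ¬ ltPZ Ab C N Ms

theorem T1_sat (Ab C : Set α) (u ab : α) (ψ : PForm α) (M : Set α) :
    Block.sat Ab (Block.mk C [ψ.disj (.atom u), PForm.iffF (.atom u) (.atom ab)] []) M ↔
    minSat Ab C (fun N => (ψ.sat N ∨ u ∈ N) ∧ (u ∈ N ↔ ab ∈ N)) M := by
  simp [Block.sat, minSat, agree_iff, iffF_sat, PForm.sat]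

theorem T2_sat (Ab C : Set α) (u ab : α) (B : Block α) (M : Set α) :
    NAT.sat Ab [Block.mk C [PForm.iffF (.atom u) (.neg (.atom ab))] [B]] M ↔
    minSat Ab C (fun N => (u ∈ N ↔ ab ∉ N) ∧ Block.sat Ab B N) M := by
  simp [NAT.sat, Block.sat, minSat, agree_iff, iffF_sat, PForm.sat]

section
variable (Ab V X Y : Set α) (u ab : α) (ψ : PForm α)

theorem T1_pos (hYV : ∀ a ∈ Y, a ∉ V) (hYX : ∀ a ∈ Y, a ∉ X)
    (huV : u ∉ V) (huX : u ∉ X) (huY : u ∉ Y) (huA : u ∉ Ab) (hab : ab ∈ Ab)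
    (hA : ∀ a ∈ Ab, a ∉ V ∧ a ∉ X ∧ a ∉ Y)
    (hall : ∀ a, a ∈ V ∨ a ∈ X ∨ a ∈ Y ∨ a = u ∨ a ∈ Ab)
    (hat : ∀ a ∈ ψ.atoms, a ∈ V ∨ a ∈ X ∨ a ∈ Y) (M : Set α)
    (IY : Set α) (h : ψ.sat ((M ∩ V) ∪ (M ∩ X) ∪ (IY ∩ Y))) :
    minSat Ab (Y ∪ {u}) (fun N => (ψ.sat N ∨ u ∈ N) ∧ (u ∈ N ↔ ab ∈ N)) M ↔
      u ∉ M ∧ ψ.sat M := by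
  constructor
  · rintro ⟨Ms, hag, ⟨h1, h2⟩, hmin⟩
    have hu' : u ∉ Ms := by
      intro hus
      apply hmin ((M ∩ V) ∪ (M ∩ X) ∪ (IY ∩ Y))
      · refine ⟨Or.inl h, ?_⟩
        have := hA ab hab
        simp; grind
      · simp only [ltPZ, lePZ_iff]
        simp only [Set.mem_union, Set.mem_inter_iff, Set.mem_singleton_iff]
        constructor
        · constructor
          · grind
          · intro a ha hb
            have := hall a
            have := hag a ha
            grind
        · rintro ⟨h3, -⟩
          have := hA ab hab
          have := h3 ab hab (h2.1 hus)
          grind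
    have h3 : ψ.sat Ms := by tauto
    refine ⟨by rwa [← hag u huA], ?_⟩
    refine (sat_congr ψ _ _ ?_).1 h3
    intro a ha
    have := hat a ha
    apply hag
    grind
  · rintro ⟨h1, h2⟩
    refine ⟨M \ Ab, by simp; grind, ⟨Or.inl ?_, by simp [*]⟩, ?_⟩
    · refine (sat_congr ψ _ _ ?_).1 h2
      intro a ha
      have := hat a ha
      simp; grind
    · intro N _ hlt
      simp only [ltPZ, lePZ_iff] at hlt
      apply hlt.2
      constructor
      · simp; grind
      · intro a ha hb
        exact (hlt.1.2 a ha hb).symm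

theorem T1_neg (huV : u ∉ V) (huX : u ∉ X) (huY : u ∉ Y) (huA : u ∉ Ab) (hab : ab ∈ Ab)
    (hA : ∀ a ∈ Ab, a ∉ V ∧ a ∉ X ∧ a ∉ Y) (hYV : ∀ a ∈ Y, a ∉ V) (hYX : ∀ a ∈ Y, a ∉ X)
    (hat : ∀ a ∈ ψ.atoms, a ∈ V ∨ a ∈ X ∨ a ∈ Y) (M : Set α)
    (h : ∀ IY : Set α, ¬ ψ.sat ((M ∩ V) ∪ (M ∩ X) ∪ (IY ∩ Y))) :
    minSat Ab (Y ∪ {u}) (fun N => (ψ.sat N ∨ u ∈ N) ∧ (u ∈ N ↔ ab ∈ N)) M ↔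
      u ∈ M := by
  have key : ∀ N : Set α, (∀ a, a ∈ V ∨ a ∈ X → (a ∈ N ↔ a ∈ M)) → ¬ ψ.sat N := by
    intro N hN hs
    apply h N
    refine (sat_congr ψ _ _ ?_).1 hs
    intro a ha
    have := hat a ha
    have := hN a
    simp; grind
  constructor
  · rintro ⟨Ms, hag, ⟨h1, h2⟩, hmin⟩
    have : ¬ ψ.sat Ms := by
      apply key
      intro a ha
      apply hag
      grind
    rw [← hag u huA]; tauto
  · intro hu
    refine ⟨(M \ Ab) ∪ {ab}, ?_, ⟨Or.inr ?_, ?_⟩, ?_⟩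
    · simp; grind
    · simp; grind
    · simp; grind
    · rintro N ⟨h1, h2⟩ hlt
      simp only [ltPZ, lePZ_iff] at hlt
      apply hlt.2
      have hn : ¬ ψ.sat N := by
        apply key
        intro a ha
        have := hlt.1.2 a
        simp at this
        grind
      have : ab ∈ N := by tauto
      constructor
      · simp; grind
      · intro a ha hb
        exact (hlt.1.2 a ha hb).symm
end

/-- Let `ψ` be propositional over the pairwise disjoint atom sets
`V`, `X`, `Y`, let `u` be a fresh atom, `ab ∈ Ab`, and `φ = ψ ∨ u`.  Let
`T₁ = {Y, u : φ, u ↔ ab}` and `T₂ = {X, Y, u : T₁, u ↔ ¬ab}`.  Then `T₂ ⊨ u` if and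
only if for every truth assignment `ν` to `V`, the QBF `∃X ∀Y ¬ψ[ν(V)]` is true
(equivalently, `∀X ∃Y ψ[ν(V)]` is false). -/
theorem nested_nat_T2 (Ab V X Y : Set α) (u ab : α) (ψ : PForm α)
    (hVX : Disjoint V X) (hVY : Disjoint V Y) (hXY : Disjoint X Y)
    (hu : u ∉ V ∪ X ∪ Y) (hab : ab ∈ Ab)
    (hAb : Disjoint (V ∪ X ∪ Y ∪ {u}) Ab) (hAt : V ∪ X ∪ Y ∪ {u} ∪ Ab = Set.univ)
    (hatoms : ψ.atoms ⊆ V ∪ X ∪ Y) :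
    (∀ M : Set α,
        NAT.sat Ab [Block.mk (X ∪ Y ∪ {u})
          [PForm.iffF (.atom u) (.neg (.atom ab))]
          [Block.mk (Y ∪ {u}) [ψ.disj (.atom u), PForm.iffF (.atom u) (.atom ab)] []]] M →
        u ∈ M) ↔
      (∀ IV : Set α, ∃ IX : Set α, ∀ IY : Set α,
        ¬ ψ.sat ((IV ∩ V) ∪ (IX ∩ X) ∪ (IY ∩ Y))) := by
  have hYV : ∀ a ∈ Y, a ∉ V := fun a h h' => Set.disjoint_left.1 hVY h' h
  have hYX : ∀ a ∈ Y, a ∉ X := fun a h h' => Set.disjoint_left.1 hXY h' h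
  have hXV : ∀ a ∈ X, a ∉ V := fun a h h' => Set.disjoint_left.1 hVX h' h
  simp only [Set.mem_union, not_or] at hu
  obtain ⟨⟨huV, huX⟩, huY⟩ := hu
  have hA' := Set.disjoint_right.1 hAb
  have hA : ∀ a ∈ Ab, a ∉ V ∧ a ∉ X ∧ a ∉ Y := by
    intro a ha
    have := hA' ha
    simp at this; tauto
  have huA : u ∉ Ab := fun h => hA' h (by simp)
  have hall : ∀ a, a ∈ V ∨ a ∈ X ∨ a ∈ Y ∨ a = u ∨ a ∈ Ab := by
    intro a
    have : a ∈ V ∪ X ∪ Y ∪ {u} ∪ Ab := by rw [hAt]; trivial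
    simp at this; tauto
  have hat : ∀ a ∈ ψ.atoms, a ∈ V ∨ a ∈ X ∨ a ∈ Y := by
    intro a ha
    have := hatoms ha
    simp at this; tauto
  have hP := T1_pos Ab V X Y u ab ψ hYV hYX huV huX huY huA hab hA hall hat
  have hN := T1_neg Ab V X Y u ab ψ huV huX huY huA hab hA hYV hYX hat
  simp only [T2_sat]
  have hne : ab ≠ u := fun h => huA (h ▸ hab)
  have habA := hA ab hab
  constructor
  · intro H IV
    by_contra hc
    push Not at hc
    obtain ⟨IY, hIY⟩ := hc ∅
    let M : Set α := (IV ∩ V) ∪ (∅ ∩ X) ∪ (IY ∩ Y) ∪ {ab}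
    have hlow : ∀ N : Set α, (∀ a ∈ V, a ∈ N ↔ a ∈ IV) → ∃ J : Set α,
        ψ.sat ((N ∩ V) ∪ (N ∩ X) ∪ (J ∩ Y)) := by
      intro N hN
      obtain ⟨J, hJ⟩ := hc N
      refine ⟨J, ?_⟩
      have : N ∩ V = IV ∩ V := by ext a; simp; grind
      rwa [this]
    have huM : u ∉ M := by simp [M]; grind
    apply huM
    apply H
    have hMV : ∀ a ∈ V, a ∈ M ↔ a ∈ IV := by intro a ha; simp [M]; grind
    refine ⟨M, fun _ _ => Iff.rfl, ⟨?_, ?_⟩, ?_⟩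
    · simp [M]; grind
    · rw [T1_sat]
      obtain ⟨J, hJ⟩ := hlow M hMV
      rw [hP M J hJ]
      refine ⟨huM, (sat_congr ψ _ _ ?_).1 hIY⟩
      intro a ha
      have := hat a ha
      simp [M]; grind
    · rintro N ⟨h1, h2⟩ hlt
      simp only [ltPZ, lePZ_iff] at hlt
      apply hlt.2
      rw [T1_sat] at h2
      obtain ⟨J, hJ⟩ := hlow N (by
        intro a ha
        rw [← hMV a ha]
        apply hlt.1.2 a
        · grind
        · simp; grind)
      rw [hP N J hJ] at h2
      have : ab ∈ N := by tauto
      constructor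
      · simp [M]; grind
      · intro a ha hb
        exact (hlt.1.2 a ha hb).symm
  · rintro H M ⟨Ms, hag, ⟨h1, h2⟩, hmin⟩
    rw [← hag u huA]
    by_contra hus
    obtain ⟨IX, hIX⟩ := H Ms
    let N : Set α := (Ms ∩ V) ∪ (IX ∩ X) ∪ {u}
    have hNV : N ∩ V = Ms ∩ V := by ext a; simp [N]; grind
    have hNX : N ∩ X = IX ∩ X := by ext a; simp [N]; grind
    apply hmin N
    · refine ⟨by simp [N]; grind, ?_⟩
      rw [T1_sat, hN]
      · simp [N]
      · rw [hNV, hNX]; exact hIX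
    · simp only [ltPZ, lePZ_iff]
      constructor
      · constructor
        · simp [N]; grind
        · intro a ha hb
          have := hall a
          simp at hb
          simp [N]; grind
      · rintro ⟨h3, -⟩
        have := h3 ab hab (by tauto)
        simp [N] at this
        grind

end NestedCirc
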